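/- Let X be a metric space, n ≥ 2, and let A, B ⊆ X be nonempty finite subsets with A having exactly n elements and B having at most n elements. Let ρ ≥ 0 with d_H(A, B) ≤ ρ, and suppose δ(A) > 2ρ, where δ(S) denotes the minimum distance between two distinct points of S. Then B has exactly n elements and δ(B) ≥ δ(A) − 2ρ. -/

import Mathlib

/-!
Moving each point of `A` to a nearest point of `B` displaces it by at most `ρ`, so it shrinks every
distance by at most `2 * ρ`. Since `δ(A) > 2 * ρ`, the map is injective; as `B` has no more points
than `A`, its image is all of `B`.
-/

open Metric

section

variable {X : Type*} [PseudoMetricSpace X] {A B : Set X}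

theorem sInf_dist_eq_infsep (S : Set X) :
    sInf {d : ℝ | ∃ x ∈ S, ∃ y ∈ S, x ≠ y ∧ d = dist x y} = S.infsep := by
  rcases S.subsingleton_or_nontrivial with hS | hS
  · have hempty : {d : ℝ | ∃ x ∈ S, ∃ y ∈ S, x ≠ y ∧ d = dist x y} = ∅ :=
      Set.eq_empty_of_forall_notMem fun _ ⟨_, hx, _, hy, hne, _⟩ ↦ hne (hS hx hy)
    rw [hempty, Real.sInf_empty, hS.infsep_zero]
  · have ⟨x, hx, y, hy, hne⟩ := hS
    refine csInf_eq_of_forall_ge_of_forall_gt_exists_lt ⟨_, x, hx, y, hy, hne, rfl⟩ ?_ ?_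
    · rintro _ ⟨x, hx, y, hy, hne, rfl⟩
      exact Set.infsep_le_dist_of_mem hx hy hne
    · intro c hc
      obtain ⟨x, hx, y, hy, hne, hlt⟩ := hS.infsep_lt_iff.mp hc
      exact ⟨_, ⟨x, hx, y, hy, hne, rfl⟩, hlt⟩

theorem exists_mapsTo_dist_le_hausdorffDist (hB : IsCompact B) (hAB : hausdorffEDist A B ≠ ⊤) :
    ∃ f : X → X, Set.MapsTo f A B ∧ ∀ a ∈ A, dist a (f a) ≤ hausdorffDist A B := by
  have hnear : ∀ a ∈ A, ∃ b ∈ B, dist a b ≤ hausdorffDist A B := by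
    intro a ha
    have hBne : B.Nonempty := nonempty_of_hausdorffEDist_ne_top ⟨a, ha⟩ hAB
    obtain ⟨b, hb, hab⟩ := hB.exists_infDist_eq_dist hBne a
    exact ⟨b, hb, hab ▸ infDist_le_hausdorffDist_of_mem ha hAB⟩
  choose! f hfB hf using hnear
  exact ⟨f, hfB, hf⟩

section Displacement

variable {f : X → X} {ρ : ℝ}

theorem infsep_sub_le_dist_of_dist_le (hf : ∀ a ∈ A, dist a (f a) ≤ ρ) {a a' : X} (ha : a ∈ A)
    (ha' : a' ∈ A) (hne : a ≠ a') : A.infsep - 2 * ρ ≤ dist (f a) (f a') := by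
  rw [sub_le_iff_le_add]
  calc
    A.infsep ≤ dist a a' := Set.infsep_le_dist_of_mem ha ha' hne
    _ ≤ dist a (f a) + dist (f a) (f a') + dist (f a') a' := dist_triangle4 ..
    _ ≤ ρ + dist (f a) (f a') + ρ := by
      gcongr
      · exact hf a ha
      · exact dist_comm a' (f a') ▸ hf a' ha'
    _ = dist (f a) (f a') + 2 * ρ := by ring

theorem injOn_of_dist_le_of_lt_infsep (hf : ∀ a ∈ A, dist a (f a) ≤ ρ) (hρ : 2 * ρ < A.infsep) :
    Set.InjOn f A := by
  intro a ha a' ha' heq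
  by_contra hne
  have hle := infsep_sub_le_dist_of_dist_le hf ha ha' hne
  rw [heq, dist_self] at hle
  linarith

theorem infsep_sub_le_infsep_image (hf : ∀ a ∈ A, dist a (f a) ≤ ρ) (hfA : (f '' A).Nontrivial) :
    A.infsep - 2 * ρ ≤ (f '' A).infsep := by
  refine hfA.le_infsep ?_
  rintro _ ⟨a, ha, rfl⟩ _ ⟨a', ha', rfl⟩ hne
  exact infsep_sub_le_dist_of_dist_le hf ha ha' (ne_of_apply_ne f hne)

end Displacement

theorem separated_set_close_set_card_and_gap_general {ρ : ℝ} (hBfin : B.Finite)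
    (hBne : B.Nonempty) (hcard : B.ncard ≤ A.ncard) (hH : hausdorffDist A B ≤ ρ)
    (hgap : 2 * ρ < A.infsep) :
    B.ncard = A.ncard ∧ A.infsep - 2 * ρ ≤ B.infsep := by
  have hρ : 0 ≤ ρ := hausdorffDist_nonneg.trans hH
  have hA : A.Nontrivial := Set.nontrivial_of_infsep_pos (by linarith)
  have hAfin : A.Finite := Set.finite_of_ncard_pos (((Set.ncard_pos hBfin).mpr hBne).trans_le hcard)
  have hAB : hausdorffEDist A B ≠ ⊤ :=
    hausdorffEDist_ne_top_of_nonempty_of_bounded hA.nonempty hBne hAfin.isBounded hBfin.isBounded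
  obtain ⟨f, hfB, hf⟩ := exists_mapsTo_dist_le_hausdorffDist hBfin.isCompact hAB
  have hfρ : ∀ a ∈ A, dist a (f a) ≤ ρ := fun a ha ↦ (hf a ha).trans hH
  have hinj : Set.InjOn f A := injOn_of_dist_le_of_lt_infsep hfρ hgap
  have himage : f '' A = B :=
    Set.eq_of_subset_of_ncard_le hfB.image_subset (hinj.ncard_image.symm ▸ hcard) hBfin
  rw [← himage]
  exact ⟨hinj.ncard_image, infsep_sub_le_infsep_image hfρ (hA.image_of_injOn hinj)⟩

end

/-- If `A` has exactly `n` elements, `B` has at most `n` elements, `d_H(A, B) ≤ ρ`, and the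
minimal gap `δ(A) = min{dist a a' : a ≠ a' ∈ A}` satisfies `δ(A) > 2ρ`, then `B` has exactly
`n` elements and `δ(B) ≥ δ(A) − 2ρ`. -/
theorem separated_set_close_set_card_and_gap
    {X : Type*} [MetricSpace X] (n : ℕ) (hn : 2 ≤ n)
    (A B : Set X) (hAfin : A.Finite) (hBfin : B.Finite)
    (hAne : A.Nonempty) (hBne : B.Nonempty)
    (hAcard : A.ncard = n) (hBcard : B.ncard ≤ n)
    (ρ : ℝ) (hρ : 0 ≤ ρ) (hH : Metric.hausdorffDist A B ≤ ρ)
    (hgap : 2 * ρ < sInf {d : ℝ | ∃ a ∈ A, ∃ a' ∈ A, a ≠ a' ∧ d = dist a a'}) :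
    B.ncard = n ∧
      sInf {d : ℝ | ∃ a ∈ A, ∃ a' ∈ A, a ≠ a' ∧ d = dist a a'} - 2 * ρ ≤
        sInf {d : ℝ | ∃ b ∈ B, ∃ b' ∈ B, b ≠ b' ∧ d = dist b b'} := by
  simp only [sInf_dist_eq_infsep, ← hAcard] at hBcard hgap ⊢
  exact separated_set_close_set_card_and_gap_general hBfin hBne hBcard hH hgap
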